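/- (Existence of Jordan bases) Let V be an arbitrary k-vector space and f an endomorphism of V admitting an annihilating polynomial, with annihilator a_f(x) = p_1(x)^{n_1} ⋯ p_r(x)^{n_r}, the p_j(x) being distinct monic irreducible polynomials. Then V, regarded as a k[x]-module via q(x)·v = q(f)(v), is isomorphic to a direct sum ⊕_{j=1}^{r} ⊕_{i=1}^{n_j} (k[x]/(p_j(x)^i))^{(S_{ij})}, where each S_{ij} is an index set of cardinality ν_i(V, p_j(f)). -/

import Mathlib

open Polynomial Module

universe u v w

section Preamble

variable {k : Type u} [Field k] {V : Type v} [AddCommGroup V] [Module k V]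

/-- `Ker p(f)^i`, as a `k[X]`-submodule of `V` viewed as a `k[X]`-module via `f`
(i.e. of the type synonym `Module.AEval' f`, on which `q(x) • v = q(f)(v)`). -/
noncomputable def kerP (f : Module.End k V) (p : k[X]) (i : ℕ) :
    Submodule k[X] (Module.AEval' f) :=
  Submodule.torsionBy k[X] (Module.AEval' f) (p ^ i)

/-- `W_i = Ker p(f)^{i-1} + p(f)(Ker p(f)^{i+1})`, as a `k[X]`-submodule. -/
noncomputable def wSub (f : Module.End k V) (p : k[X]) (i : ℕ) :
    Submodule k[X] (Module.AEval' f) :=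
  kerP f p (i - 1) ⊔ (kerP f p (i + 1)).map (LinearMap.lsmul k[X] (Module.AEval' f) p)

/-- The quotient `Ker p(f)^i / (Ker p(f)^{i-1} + p(f)(Ker p(f)^{i+1}))`, as a `k[X]`-module. -/
abbrev Qmod (f : Module.End k V) (p : k[X]) (i : ℕ) : Type v :=
  kerP f p i ⧸ (wSub f p i).comap (kerP f p i).subtype

theorem qmod_isTorsionBy (f : Module.End k V) (p : k[X]) (i : ℕ) :
    Module.IsTorsionBy k[X] (Qmod f p i) p := by
  intro x
  obtain ⟨⟨v, hv⟩, rfl⟩ := Submodule.Quotient.mk_surjective _ x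
  rw [← Submodule.Quotient.mk_smul, Submodule.Quotient.mk_eq_zero]
  refine Submodule.mem_comap.mpr (Submodule.mem_sup_right ?_)
  refine Submodule.mem_map.mpr ⟨v, ?_, by simp⟩
  rw [kerP, Submodule.mem_torsionBy_iff] at hv ⊢
  rw [pow_succ', mul_smul, hv, smul_zero]

/-- The `K = k[x]/(p(x))`-vector space structure on
`Ker p(f)^i / (Ker p(f)^{i-1} + p(f)(Ker p(f)^{i+1}))`, induced by the `k[x]`-module
structure `q(x) • v = q(f)(v)`. -/
noncomputable instance qmodModule (f : Module.End k V) (p : k[X]) (i : ℕ) :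
    Module (k[X] ⧸ Ideal.span {p}) (Qmod f p i) :=
  (qmod_isTorsionBy f p i).module

/-- The invariant `ν_i(V, p(f))`: the dimension of
`Ker p(f)^i / (Ker p(f)^{i-1} + p(f)(Ker p(f)^{i+1}))` as a vector space over
`K = k[x]/(p(x))`. -/
noncomputable def nu (f : Module.End k V) (p : k[X]) (i : ℕ) : Cardinal.{v} :=
  Module.rank (k[X] ⧸ Ideal.span {p}) (Qmod f p i)

end Preamble

open DirectSum

/-!
For an element `p` of a commutative ring `R`, lift bases of the quotients
`Ker pⁱ / (Ker pⁱ⁻¹ + p Ker pⁱ⁺¹)` over `R/(p)` to vectors of `M`. The lifts of level `i + 1` are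
killed by `pⁱ⁺¹`. If `Ker pᵐ ≤ Ker pⁿ` for all `m`, then the lifts span `Ker pⁿ`: a descending
induction on `i` absorbs the term `p Ker pⁱ⁺²` into `Ker pⁱ`, and an ascending one then removes
`Ker pⁱ`. There are no further relations: multiplying a relation by a power of `p` brings it to the
form `∑ pⁱ xᵢ = 0` with `xᵢ` a combination of lifts of level `i + 1`, and the lowest nonzero term of
such a sum has `xᵢ ∈ Ker pⁱ + p Ker pⁱ⁺²`, so its coefficients are divisible by `p`. Finally, `M` is
the direct sum of its primary components.
-/

section UlmInvariants

variable {R : Type u} [CommRing R] (M : Type v) [AddCommGroup M] [Module R M] (p : R) (i : ℕ)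

/-- The submodule `Ker pⁱ⁻¹ + p Ker pⁱ⁺¹` of `M`, for `i ≥ 1`. -/
noncomputable def ulmRelation : Submodule R M :=
  Submodule.torsionBy R M (p ^ (i - 1)) ⊔
    (Submodule.torsionBy R M (p ^ (i + 1))).map (LinearMap.lsmul R M p)

/-- The quotient `Ker pⁱ / (Ker pⁱ⁻¹ + p Ker pⁱ⁺¹)`. Multiplication by `pⁱ⁻¹` identifies it with the
classical Ulm–Kaplansky quotient `(pⁱ⁻¹M ∩ Ker p) / (pⁱM ∩ Ker p)`. -/
abbrev UlmQuotient : Type v :=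
  Submodule.torsionBy R M (p ^ i) ⧸
    (ulmRelation M p i).comap (Submodule.torsionBy R M (p ^ i)).subtype

theorem isTorsionBy_ulmQuotient : IsTorsionBy R (UlmQuotient M p i) p := by
  rw [isTorsionBy_quotient_iff]
  rintro ⟨x, hx⟩
  refine Submodule.mem_sup_right ⟨x, ?_, rfl⟩
  rw [SetLike.mem_coe, Submodule.mem_torsionBy_iff] at *
  rw [pow_succ', mul_smul, hx, smul_zero]

noncomputable instance ulmQuotientModule : Module (R ⧸ Ideal.span {p}) (UlmQuotient M p i) :=
  (isTorsionBy_ulmQuotient M p i).module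

instance : IsScalarTower R (R ⧸ Ideal.span {p}) (UlmQuotient M p i) :=
  IsTorsionBySet.isScalarTower
    ((isTorsionBySet_span_singleton_iff p).mpr (isTorsionBy_ulmQuotient M p i))

/-- The rank over `R/(p)` of `Ker pⁱ / (Ker pⁱ⁻¹ + p Ker pⁱ⁺¹)`; it counts the summands `R/(pⁱ)`. -/
noncomputable def ulmInvariant : Cardinal.{v} :=
  Module.rank (R ⧸ Ideal.span {p}) (UlmQuotient M p i)

end UlmInvariants

section TorsionFiltration

variable {R : Type u} [CommRing R] {M : Type v} [AddCommGroup M] [Module R M] {p : R}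

theorem mem_ulmRelation_succ {i : ℕ} {x : M} :
    x ∈ ulmRelation M p (i + 1) ↔
      ∃ a : M, p ^ i • a = 0 ∧ ∃ y : M, p ^ (i + 2) • y = 0 ∧ a + p • y = x := by
  simp [ulmRelation, Submodule.mem_sup]

theorem mem_ulmRelation_succ_of_sum_pow_smul_eq_zero {n : ℕ} {x : Fin n → M}
    (hx : ∀ i : Fin n, p ^ (i + 1 : ℕ) • x i = 0) (hsum : ∑ i : Fin n, p ^ (i : ℕ) • x i = 0)
    (m : Fin n) (hlow : ∀ i < m, p ^ (i : ℕ) • x i = 0) :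
    x m ∈ ulmRelation M p (m + 1) := by
  have htail : p ^ (m : ℕ) • x m + ∑ i ∈ Finset.Ioi m, p ^ (i : ℕ) • x i = 0 := by
    rw [Finset.add_sum_Ioi_eq_sum_Ici (f := fun i : Fin n => p ^ (i : ℕ) • x i), ← hsum]
    exact Finset.sum_subset (Finset.subset_univ _) fun i _ hi => hlow i (by simpa using hi)
  set y : M := ∑ i ∈ Finset.Ioi m, p ^ (i - (m + 1) : ℕ) • x i
  have hy : p ^ (m + 1 : ℕ) • y = ∑ i ∈ Finset.Ioi m, p ^ (i : ℕ) • x i := by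
    rw [Finset.smul_sum]
    refine Finset.sum_congr rfl fun i hi => ?_
    rw [smul_smul, ← pow_add, Nat.add_sub_cancel' (Fin.lt_def.mp (Finset.mem_Ioi.mp hi))]
  have hy_torsion : p ^ (m + 2 : ℕ) • y = 0 := by
    rw [pow_succ', mul_smul, hy, Finset.smul_sum]
    refine Finset.sum_eq_zero fun i _ => ?_
    rw [smul_smul, ← pow_succ', hx]
  refine mem_ulmRelation_succ.mpr ⟨x m + p • y, ?_, -y, by simp [hy_torsion], by simp⟩
  rw [smul_add, smul_smul, ← pow_succ, hy, htail]

theorem torsionBy_pow_le_of_le_sup_ulmRelation {n : ℕ} {N : Submodule R M}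
    (hn : ∀ m, Submodule.torsionBy R M (p ^ m) ≤ Submodule.torsionBy R M (p ^ n))
    (hN : ∀ i < n, Submodule.torsionBy R M (p ^ (i + 1)) ≤ N ⊔ ulmRelation M p (i + 1)) :
    Submodule.torsionBy R M (p ^ n) ≤ N := by
  have hstep : ∀ i ≤ n, Submodule.torsionBy R M (p ^ (i + 1)) ≤
      N ⊔ Submodule.torsionBy R M (p ^ i) := by
    intro i hi
    induction hi using Nat.decreasingInduction with
    | self => exact (hn _).trans le_sup_right
    | of_succ i hi ih =>
      intro x hx
      obtain ⟨z, hz, w, hw, rfl⟩ := Submodule.mem_sup.mp (hN i hi hx)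
      obtain ⟨a, ha, y, hy, rfl⟩ := mem_ulmRelation_succ.mp hw
      obtain ⟨z', hz', a', ha', rfl⟩ := Submodule.mem_sup.mp (ih hy)
      refine Submodule.mem_sup.mpr
        ⟨z + p • z', N.add_mem hz (N.smul_mem p hz'), a + p • a', ?_, by module⟩
      rw [Submodule.mem_torsionBy_iff] at ha' ⊢
      rw [smul_add, ha, smul_smul, ← pow_succ, ha', add_zero]
  have hall : ∀ i ≤ n, Submodule.torsionBy R M (p ^ i) ≤ N := by
    intro i
    induction i with
    | zero => simp
    | succ i ih => exact fun hi => (hstep i (by lia)).trans (sup_le le_rfl (ih (by lia)))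
  exact hall n le_rfl

theorem torsionBy_pow_le_of_isCoprime {q : R} (hpq : IsCoprime p q) {n : ℕ}
    (htor : IsTorsionBy R M (p ^ n * q)) (m : ℕ) :
    Submodule.torsionBy R M (p ^ m) ≤ Submodule.torsionBy R M (p ^ n) := by
  intro x hx
  obtain ⟨a, b, hab⟩ : IsCoprime (p ^ m) q := hpq.pow_left
  rw [Submodule.mem_torsionBy_iff] at hx ⊢
  calc p ^ n • x = (p ^ n * a) • p ^ m • x + b • (p ^ n * q) • x := by
        rw [smul_smul, smul_smul, ← add_smul]
        congr 1
        linear_combination -p ^ n * hab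
    _ = 0 := by rw [hx, htor, smul_zero, smul_zero, add_zero]

end TorsionFiltration

section UlmLift

variable {R : Type u} [CommRing R] {M : Type v} [AddCommGroup M] [Module R M] {p : R} {i : ℕ}
  {S : Type w} (b : Basis S (R ⧸ Ideal.span {p}) (UlmQuotient M p i))

/-- A choice of representatives in `Ker pⁱ` for a basis of `Ker pⁱ / (Ker pⁱ⁻¹ + p Ker pⁱ⁺¹)`: the
generators of the Jordan blocks of size `i`. -/
noncomputable def ulmLift (s : S) : Submodule.torsionBy R M (p ^ i) :=
  (b s).out

theorem mkQ_ulmLift (s : S) :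
    (Submodule.mkQ _ (ulmLift b s) : UlmQuotient M p i) = b s :=
  Quotient.out_eq _

theorem dvd_of_sum_smul_ulmLift_mem {F : Finset S} {c : S → R}
    (h : ∑ s ∈ F, c s • (ulmLift b s : M) ∈ ulmRelation M p i) {s : S} (hs : s ∈ F) :
    p ∣ c s := by
  have hmk : ∑ s ∈ F, Ideal.Quotient.mk (Ideal.span {p}) (c s) • b s = 0 := by
    have hmem : ∑ s ∈ F, c s • ulmLift b s ∈
        (ulmRelation M p i).comap (Submodule.torsionBy R M (p ^ i)).subtype := by
      simpa using h
    rw [← Submodule.Quotient.mk_eq_zero, ← Submodule.mkQ_apply, map_sum] at hmem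
    rw [← hmem]
    refine Finset.sum_congr rfl fun s _ => ?_
    rw [map_smul, mkQ_ulmLift, (isTorsionBy_ulmQuotient M p i).mk_smul]
  rw [← Ideal.mem_span_singleton, ← Ideal.Quotient.eq_zero_iff_mem]
  exact linearIndependent_iff'.mp b.linearIndependent F _ hmk s hs

theorem torsionBy_pow_le_span_ulmLift_sup_ulmRelation :
    Submodule.torsionBy R M (p ^ i) ≤
      Submodule.span R (Set.range fun s => (ulmLift b s : M)) ⊔ ulmRelation M p i := by
  let π : Submodule.torsionBy R M (p ^ i) →ₗ[R] UlmQuotient M p i := Submodule.mkQ _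
  have hmap : (Submodule.span R (Set.range (ulmLift b))).map π = ⊤ := by
    have hrange : Set.range (π ∘ ulmLift b) = Set.range b :=
      congrArg Set.range (funext (mkQ_ulmLift b))
    rw [Submodule.map_span, ← Set.range_comp, hrange, ← Submodule.restrictScalars_span R
      (R ⧸ Ideal.span {p}) Ideal.Quotient.mk_surjective, b.span_eq, Submodule.restrictScalars_top]
  intro x hx
  obtain ⟨w, hw, z, hz, hwz⟩ := Submodule.mem_sup.mp <|
    ((Submodule.map_mkQ_eq_top _ _).mp hmap).ge (Submodule.mem_top (x := ⟨x, hx⟩))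
  refine Submodule.mem_sup.mpr ⟨z, ?_, w, hw, by rw [add_comm]; exact congrArg Subtype.val hwz⟩
  have := Submodule.mem_map_of_mem (f := (Submodule.torsionBy R M (p ^ i)).subtype) hz
  rwa [Submodule.map_span, ← Set.range_comp] at this

end UlmLift

section JordanDecomposition

open Function

variable {R : Type u} [CommRing R] {M : Type v} [AddCommGroup M] [Module R M]

theorem nonempty_directSum_quotient_equiv_span {T : Type*} {I : T → Ideal R} {x : T → M}
    (h : ∀ c, Finsupp.linearCombination R x c = 0 ↔ ∀ t, c t ∈ I t) :
    Nonempty ((⨁ t, R ⧸ I t) ≃ₗ[R] Submodule.span R (Set.range x)) := by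
  classical
  let π : (T →₀ R) →ₗ[R] ⨁ t, R ⧸ I t :=
    DirectSum.lmap (fun t => (I t).mkQ) ∘ₗ (finsuppLEquivDirectSum R R T).toLinearMap
  have hπ : Surjective π :=
    ((DirectSum.lmap_surjective _).mpr fun t => (I t).mkQ_surjective).comp
      (LinearEquiv.surjective _)
  have hker : LinearMap.ker π = LinearMap.ker (Finsupp.linearCombination R x) := by
    ext c
    rw [LinearMap.mem_ker, LinearMap.mem_ker, h, DFinsupp.ext_iff]
    refine forall_congr' fun t => ?_
    change Ideal.Quotient.mk (I t) (c t) = 0 ↔ _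
    rw [Ideal.Quotient.eq_zero_iff_mem]
  exact ⟨(π.quotKerEquivOfSurjective hπ).symm ≪≫ₗ Submodule.quotEquivOfEq _ _ hker ≪≫ₗ
    (Finsupp.linearCombination R x).quotKerEquivRange ≪≫ₗ
    LinearEquiv.ofEq _ _ (Finsupp.range_linearCombination R)⟩

section Primary

variable {p : R} {S : ℕ → Type w}
  (b : ∀ i, Basis (S i) (R ⧸ Ideal.span {p}) (UlmQuotient M p i)) {n : ℕ}

theorem dvd_of_sum_pow_smul_ulmLift_eq_zero {F : ∀ i : Fin n, Finset (S (i + 1))}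
    {c : ∀ i : Fin n, S (i + 1) → R}
    (h : ∑ i : Fin n, p ^ (i : ℕ) • ∑ s ∈ F i, c i s • (ulmLift (b (i + 1)) s : M) = 0)
    (i : Fin n) : ∀ s ∈ F i, p ∣ c i s := by
  induction i using WellFoundedLT.induction with
  | ind i ih =>
    refine fun s hs => dvd_of_sum_smul_ulmLift_mem (b (i + 1)) ?_ hs
    refine mem_ulmRelation_succ_of_sum_pow_smul_eq_zero
      (x := fun i => ∑ s ∈ F i, c i s • (ulmLift (b (i + 1)) s : M)) (fun j => ?_) h i
      fun j hj => ?_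
    · rw [Finset.smul_sum]
      refine Finset.sum_eq_zero fun s _ => ?_
      rw [smul_comm, Submodule.smul_coe_torsionBy, smul_zero]
    · rw [Finset.smul_sum]
      refine Finset.sum_eq_zero fun s hs => ?_
      obtain ⟨d, hd⟩ := ih j hj s hs
      rw [hd, smul_smul, ← mul_assoc, ← pow_succ, mul_comm, mul_smul,
        Submodule.smul_coe_torsionBy, smul_zero]

theorem pow_dvd_of_sum_smul_ulmLift_eq_zero {F : ∀ i : Fin n, Finset (S (i + 1))}
    {c : ∀ i : Fin n, S (i + 1) → R}
    (h : ∑ i : Fin n, ∑ s ∈ F i, c i s • (ulmLift (b (i + 1)) s : M) = 0) (i : Fin n) :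
    ∀ s ∈ F i, p ^ (i + 1 : ℕ) ∣ c i s := by
  suffices hall : ∀ m ≤ n, ∀ i : Fin n, ∀ s ∈ F i, p ^ (i + 1 - m : ℕ) ∣ c i s from
    hall 0 n.zero_le i
  intro m hm
  induction hm using Nat.decreasingInduction with
  | self => exact fun i s _ => by simp [Nat.sub_eq_zero_of_le i.isLt]
  | of_succ m _ ih =>
    simp only [Nat.add_sub_add_right] at ih
    choose! d hd using ih
    -- The relation `h` multiplied by `p ^ m`, which kills the lifts of level at most `m`.
    have hsum : ∑ i : Fin n, p ^ (i : ℕ) • ∑ s ∈ F i,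
        (if m ≤ (i : ℕ) then d i s else 0) • (ulmLift (b (i + 1)) s : M) = 0 := by
      refine Eq.trans ?_ ((congrArg (p ^ m • ·) h).trans (smul_zero _))
      rw [Finset.smul_sum]
      refine Finset.sum_congr rfl fun i _ => ?_
      rw [Finset.smul_sum, Finset.smul_sum]
      refine Finset.sum_congr rfl fun s hs => ?_
      split_ifs with hmi
      · rw [hd i s hs, smul_smul, smul_smul, ← mul_assoc, ← pow_add, Nat.add_sub_cancel' hmi]
      · rw [zero_smul, smul_zero, smul_comm, (Submodule.mem_torsionBy_iff _ _).mp
          (Submodule.torsionBy_le_torsionBy_of_dvd _ _ (pow_dvd_pow p (by lia))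
            (ulmLift (b (i + 1)) s).2), smul_zero]
    intro i s hs
    by_cases hmi : m ≤ (i : ℕ)
    · have hdvd := dvd_of_sum_pow_smul_ulmLift_eq_zero b hsum i s hs
      rw [if_pos hmi] at hdvd
      rw [hd i s hs, Nat.sub_add_comm hmi, pow_succ]
      exact mul_dvd_mul_left _ hdvd
    · simp [Nat.sub_eq_zero_of_le (not_le.mp hmi)]

theorem linearCombination_ulmLift_eq_zero_iff (c : (Σ i : Fin n, S (i + 1)) →₀ R) :
    Finsupp.linearCombination R
        (fun t : Σ i : Fin n, S (i + 1) => (ulmLift (b (t.1 + 1)) t.2 : M)) c = 0 ↔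
      ∀ t, c t ∈ Ideal.span {p ^ (t.1 + 1 : ℕ)} := by
  classical
  simp only [Ideal.mem_span_singleton]
  constructor
  · intro h
    let F (i : Fin n) : Finset (S (i + 1)) :=
      c.support.preimage (Sigma.mk (β := fun i : Fin n => S (i + 1)) i) sigma_mk_injective.injOn
    have hF : Finset.univ.sigma F = c.support :=
      (Finset.sigma_preimage_mk_of_subset _ (Finset.subset_univ _))
    rw [Finsupp.linearCombination_apply, Finsupp.sum, ← hF, Finset.sum_sigma] at h
    rintro ⟨i, s⟩
    by_cases hs : s ∈ F i
    · exact pow_dvd_of_sum_smul_ulmLift_eq_zero b (c := fun i s => c ⟨i, s⟩) h i s hs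
    · rw [show c ⟨i, s⟩ = 0 by simpa [F] using hs]
      exact dvd_zero _
  · intro h
    refine Finset.sum_eq_zero fun t _ => ?_
    obtain ⟨d, hd⟩ := h t
    change c t • (ulmLift (b (t.1 + 1)) t.2 : M) = 0
    rw [hd, mul_comm, mul_smul, Submodule.smul_coe_torsionBy, smul_zero]

end Primary

theorem nonempty_torsionBy_pow_equiv_directSum {p : R} {n : ℕ} {S : ℕ → Type w}
    (b : ∀ i, Basis (S i) (R ⧸ Ideal.span {p}) (UlmQuotient M p i))
    (hn : ∀ m, Submodule.torsionBy R M (p ^ m) ≤ Submodule.torsionBy R M (p ^ n)) :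
    Nonempty (Submodule.torsionBy R M (p ^ n) ≃ₗ[R]
      ⨁ t : Σ i : Fin n, S (i + 1), R ⧸ Ideal.span {p ^ (t.1 + 1 : ℕ)}) := by
  let x (t : Σ i : Fin n, S (i + 1)) : M := ulmLift (b (t.1 + 1)) t.2
  have hspan : Submodule.span R (Set.range x) = Submodule.torsionBy R M (p ^ n) := by
    apply le_antisymm
    · rw [Submodule.span_le]
      rintro _ ⟨t, rfl⟩
      exact hn _ (ulmLift (b (t.1 + 1)) t.2).2
    · refine torsionBy_pow_le_of_le_sup_ulmRelation hn fun i hi =>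
        (torsionBy_pow_le_span_ulmLift_sup_ulmRelation (b (i + 1))).trans
          (sup_le_sup_right (Submodule.span_mono ?_) _)
      rintro _ ⟨s, rfl⟩
      exact ⟨⟨⟨i, hi⟩, s⟩, rfl⟩
  obtain ⟨e⟩ := nonempty_directSum_quotient_equiv_span (linearCombination_ulmLift_eq_zero_iff b)
  exact ⟨(e ≪≫ₗ LinearEquiv.ofEq _ _ hspan).symm⟩

variable {ι : Type w} [Fintype ι] {p : ι → R} {n : ι → ℕ}

theorem isInternal_torsionBy_of_isTorsionBy_prod {q : ι → R} (hq : Pairwise (IsCoprime on q))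
    (htor : IsTorsionBy R M (∏ j, q j)) [DecidableEq ι] :
    DirectSum.IsInternal fun j => Submodule.torsionBy R M (q j) := by
  have hq' : ((Finset.univ : Finset ι) : Set ι).Pairwise (IsCoprime on q) := hq.set_pairwise _
  refine DirectSum.isInternal_submodule_of_iSupIndep_of_iSup_eq_top
    (iSupIndep_iff_supIndep_univ.mpr (Submodule.supIndep_torsionBy hq')) ?_
  simpa [(isTorsionBy_iff_torsionBy_eq_top _).mp htor] using
    Submodule.iSup_torsionBy_eq_torsionBy_prod (M := M) hq'

theorem torsionBy_pow_le_of_isTorsionBy_prod (hcop : Pairwise (IsCoprime on p))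
    (htor : IsTorsionBy R M (∏ j, p j ^ n j)) (j : ι) (m : ℕ) :
    Submodule.torsionBy R M (p j ^ m) ≤ Submodule.torsionBy R M (p j ^ n j) := by
  classical
  rw [← Finset.mul_prod_erase _ _ (Finset.mem_univ j)] at htor
  exact torsionBy_pow_le_of_isCoprime (IsCoprime.prod_right fun j' hj' =>
    (hcop (Finset.ne_of_mem_erase hj').symm).pow_right) htor m

theorem stmt_9_general (hmax : ∀ j, (Ideal.span {p j}).IsMaximal)
    (hcop : Pairwise (IsCoprime on p)) (htor : IsTorsionBy R M (∏ j, p j ^ n j)) :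
    ∃ (S : ι → ℕ → Type v)
      (_ : M ≃ₗ[R] ⨁ x : Σ j : ι, Σ i : Fin (n j), S j (i + 1),
        R ⧸ Ideal.span {p x.1 ^ (x.2.1 + 1 : ℕ)}),
      ∀ j i, Cardinal.mk (S j i) = ulmInvariant M (p j) i := by
  classical
  let _ (j : ι) : Field (R ⧸ Ideal.span {p j}) := Ideal.Quotient.field _
  have hfree (j : ι) (i : ℕ) : Free (R ⧸ Ideal.span {p j}) (UlmQuotient M (p j) i) :=
    Free.of_divisionRing _ _
  have hprimary (j : ι) := nonempty_torsionBy_pow_equiv_directSum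
    (fun i => Free.chooseBasis (R ⧸ Ideal.span {p j}) (UlmQuotient M (p j) i))
    (torsionBy_pow_le_of_isTorsionBy_prod hcop htor j)
  have hinternal := isInternal_torsionBy_of_isTorsionBy_prod (M := M) (q := fun j => p j ^ n j)
    (fun _ _ h => (hcop h).pow) htor
  refine ⟨fun j i => Free.ChooseBasisIndex (R ⧸ Ideal.span {p j}) (UlmQuotient M (p j) i),
    (LinearEquiv.ofBijective (DirectSum.coeLinearMap _) hinternal).symm ≪≫ₗ ?_, fun j i =>
    (Free.rank_eq_card_chooseBasisIndex _ _).symm⟩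
  exact (DFinsupp.mapRange.linearEquiv fun j => (hprimary j).some) ≪≫ₗ
    (DirectSum.sigmaLcurryEquiv R
      (δ := fun j (t : Σ i : Fin (n j), _) => R ⧸ Ideal.span {p j ^ (t.1 + 1 : ℕ)})).symm

end JordanDecomposition

section PolynomialModules

variable {k : Type u} [Field k]

theorem isTorsionBy_minpoly {V : Type v} [AddCommGroup V] [Module k V] (f : Module.End k V) :
    IsTorsionBy k[X] (AEval' f) (minpoly k f) := by
  rw [isTorsionBy_iff_mem_annihilator, AEval.annihilator_eq_ker_aeval]
  exact minpoly.aeval k f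

theorem isCoprime_of_monic_of_irreducible_of_ne {p q : k[X]} (hp : p.Monic) (hq : q.Monic)
    (hp' : Irreducible p) (hq' : Irreducible q) (hpq : p ≠ q) : IsCoprime p q :=
  hp'.coprime_iff_not_dvd.mpr fun hdvd =>
    hpq (eq_of_monic_of_associated hp hq (hp'.associated_of_dvd hq' hdvd))

end PolynomialModules

/-- **Existence of Jordan bases.**  Let `V` be an arbitrary `k`-vector space and
`f` an endomorphism of `V` admitting an annihilating polynomial, with annihilator
`a_f(x) = p_1(x)^{n_1} ⋯ p_r(x)^{n_r}`, the `p_j(x)` being distinct monic irreducible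
polynomials.  Then `V`, regarded as a `k[x]`-module via `q(x) • v = q(f)(v)` (the type synonym
`Module.AEval' f`), is isomorphic to a direct sum
`⊕_{j=1}^{r} ⊕_{i=1}^{n_j} (k[x]/(p_j(x)^i))^{(S j i)}`, where each `S j i` is an index set of
cardinality `ν_i(V, p_j(f))`. -/
theorem stmt_9 {k : Type u} [Field k] {V : Type v} [AddCommGroup V] [Module k V]
    (f : Module.End k V) (hf : ∃ q : k[X], q ≠ 0 ∧ aeval f q = 0)
    (r : ℕ) (p : Fin r → k[X]) (n : Fin r → ℕ)
    (hmonic : ∀ j, (p j).Monic) (hirr : ∀ j, Irreducible (p j))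
    (hdist : ∀ j j', j ≠ j' → p j ≠ p j')
    (hmin : minpoly k f = ∏ j, p j ^ n j) :
    ∃ (S : Fin r → ℕ → Type v)
      (_ : Module.AEval' f ≃ₗ[k[X]]
        ⨁ x : Σ j : Fin r, Σ _i : Fin (n j), S j ((_i : ℕ) + 1),
          k[X] ⧸ Ideal.span {p x.1 ^ ((x.2.1 : ℕ) + 1)}),
      ∀ j : Fin r, ∀ i : Fin (n j), Cardinal.mk (S j ((i : ℕ) + 1)) = nu f (p j) ((i : ℕ) + 1) := by
  obtain ⟨S, e, hS⟩ := stmt_9_general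
    (fun j => PrincipalIdealRing.isMaximal_of_irreducible (hirr j))
    (fun j j' h => isCoprime_of_monic_of_irreducible_of_ne (hmonic j) (hmonic j') (hirr j)
      (hirr j') (hdist j j' h))
    (hmin ▸ isTorsionBy_minpoly f)
  exact ⟨S, e, fun j i => hS j (i + 1)⟩
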